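/- Let d ≥ 2 and 2 ≤ k ≤ d. For every real number t < max{k−1, d/2} there exists a compact set E ⊂ ℝ^d with Hausdorff dimension dim_H(E) > t such that the k(k+1)/2-dimensional Lebesgue measure of T_k(E) is zero. Consequently the optimal exponent α_{k,d}, defined as the infimum of those α for which dim_H(E) > α implies that T_k(E) has positive k(k+1)/2-dimensional Lebesgue measure, satisfies α_{k,d} ≥ max{k−1, d/2}. -/

import Mathlib

open MeasureTheory Metric Set Topology
open scoped ENNReal

noncomputable section

/-- `ℝ^d` as Euclidean space. -/
abbrev Pt (d : ℕ) := EuclideanSpace ℝ (Fin d)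

/-- The index set of pairs `i < j` in `{1, …, k+1}`; it has `k(k+1)/2` elements. -/
abbrev PairIdx (k : ℕ) : Type := {p : Fin (k+1) × Fin (k+1) // p.1 < p.2}

/-- The map sending a `(k+1)`-tuple of points to its vector of pairwise distances. -/
def simplexMap (d k : ℕ) (x : Fin (k+1) → Pt d) : PairIdx k → ℝ :=
  fun p => dist (x p.1.1) (x p.1.2)

/-- A `(k+1)`-tuple is nondegenerate if `x^2 - x^1, …, x^{k+1} - x^1` are linearly
independent. -/
def Nondeg (d k : ℕ) (x : Fin (k+1) → Pt d) : Prop :=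
  LinearIndependent ℝ (fun i : Fin k => x i.succ - x 0)

/-- `T_k(E)`: the set of congruence classes of nondegenerate `k`-simplices with vertices in `E`,
realized as a subset of `ℝ^{k(k+1)/2}` via the pairwise-distance map. -/
def Tconf (d k : ℕ) (E : Set (Pt d)) : Set (PairIdx k → ℝ) :=
  simplexMap d k '' {x | (∀ i, x i ∈ E) ∧ Nondeg d k x}


/-- Sum of binary digits `e j` put at positions `σ j`. -/
def FF (σ : ℕ → ℕ) (e : ℕ → Fin 2) : ℝ := ∑' j, ((e j : ℕ) : ℝ) * (1/2 : ℝ)^(σ j + 1)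

/-- Integer truncation. -/
def XX (σ : ℕ → ℕ) (e : ℕ → Fin 2) (n : ℕ) : ℤ :=
  ∑ j ∈ Finset.range (n+1), ((e j : ℕ) : ℤ) * 2^(σ n - σ j)

lemma dig_le (e : ℕ → Fin 2) (j : ℕ) : ((e j : ℕ) : ℝ) ≤ 1 := by
  have : (e j : ℕ) ≤ 1 := by omega
  exact_mod_cast this

lemma term_le {σ : ℕ → ℕ} (hσ : StrictMono σ) (e : ℕ → Fin 2) (n j : ℕ) :
    ((e (j+n) : ℕ) : ℝ) * (1/2 : ℝ)^(σ (j+n) + 1) ≤ (1/2:ℝ)^(σ n) / 2 / 2^j := by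
  have h1 : σ n + j ≤ σ (j+n) := by
    have := hσ.add_le_nat j n
    rw [add_comm j n] at this ⊢
    omega
  calc ((e (j+n) : ℕ) : ℝ) * (1/2 : ℝ)^(σ (j+n) + 1) ≤ 1 * (1/2 : ℝ)^(σ n + j + 1) := by
        apply mul_le_mul (dig_le _ _) _ (by positivity) (by norm_num)
        exact pow_le_pow_of_le_one (by norm_num) (by norm_num) (by omega)
    _ = _ := by rw [pow_succ, pow_add, one_div_pow 2 j]; ring

lemma FF_summable {σ : ℕ → ℕ} (hσ : StrictMono σ) (e : ℕ → Fin 2) :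
    Summable (fun j => ((e j : ℕ) : ℝ) * (1/2 : ℝ)^(σ j + 1)) := by
  refine Summable.of_nonneg_of_le (fun j => by positivity) (fun j => ?_)
    (summable_geometric_two' ((1/2:ℝ)^(σ 0)))
  simpa using term_le hσ e 0 j

lemma FF_tail {σ : ℕ → ℕ} (hσ : StrictMono σ) (e : ℕ → Fin 2) (n : ℕ) :
    ∑ j ∈ Finset.range n, ((e j : ℕ) : ℝ) * (1/2 : ℝ)^(σ j + 1) ≤ FF σ e ∧
    FF σ e ≤ ∑ j ∈ Finset.range n, ((e j : ℕ) : ℝ) * (1/2 : ℝ)^(σ j + 1) + (1/2:ℝ)^(σ n) := by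
  have hs := FF_summable hσ e
  have h := hs.sum_add_tsum_nat_add n
  have hs' := (summable_nat_add_iff n).2 hs
  have h0 : 0 ≤ ∑' j, ((e (j+n) : ℕ) : ℝ) * (1/2 : ℝ)^(σ (j+n) + 1) :=
    tsum_nonneg (fun j => by positivity)
  have h1 : ∑' j, ((e (j+n) : ℕ) : ℝ) * (1/2 : ℝ)^(σ (j+n) + 1) ≤ (1/2:ℝ)^(σ n) := by
    rw [← tsum_geometric_two' ((1/2:ℝ)^(σ n))]
    exact hs'.tsum_le_tsum (term_le hσ e n) (summable_geometric_two' _)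
  unfold FF
  constructor <;> linarith

lemma XX_cast {σ : ℕ → ℕ} (hσ : StrictMono σ) (e : ℕ → Fin 2) (n : ℕ) :
    ∑ j ∈ Finset.range (n+1), ((e j : ℕ) : ℝ) * (1/2 : ℝ)^(σ j + 1)
      = (XX σ e n : ℝ) * (1/2:ℝ)^(σ n + 1) := by
  unfold XX
  push_cast
  rw [Finset.sum_mul]
  refine Finset.sum_congr rfl (fun j hj => ?_)
  have : σ j ≤ σ n := hσ.monotone (by simpa [Nat.lt_succ_iff] using hj)
  obtain ⟨m, hm⟩ := Nat.exists_eq_add_of_le this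
  rw [hm, Nat.add_sub_cancel_left, mul_assoc]
  congr 1
  rw [show σ j + m + 1 = m + (σ j + 1) by ring, pow_add _ m, ← mul_assoc, ← mul_pow]
  norm_num

lemma XX_succ {σ : ℕ → ℕ} (hσ : StrictMono σ) (e : ℕ → Fin 2) (n : ℕ) :
    XX σ e (n+1) = 2^(σ (n+1) - σ n) * XX σ e n + ((e (n+1) : ℕ) : ℤ) := by
  unfold XX
  rw [Finset.sum_range_succ, Finset.mul_sum]
  simp only [Nat.sub_self, pow_zero, mul_one]
  congr 1
  refine Finset.sum_congr rfl (fun j hj => ?_)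
  have h1 : σ j ≤ σ n := hσ.monotone (by simpa [Nat.lt_succ_iff] using hj)
  have h2 : σ n < σ (n+1) := hσ (by omega)
  rw [show σ (n+1) - σ j = (σ (n+1) - σ n) + (σ n - σ j) by omega, pow_add]
  ring

lemma XX_key {σ : ℕ → ℕ} (hσ : StrictMono σ) (a b : ℕ → Fin 2) (n : ℕ)
    (h : |XX σ a n - XX σ b n| ≤ 1) :
    XX id a n - XX id b n = XX σ a n - XX σ b n := by
  induction n with
  | zero => simp [XX]
  | succ n ih =>
    rw [XX_succ strictMono_id, XX_succ strictMono_id]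
    rw [XX_succ hσ, XX_succ hσ] at h ⊢
    have h2 : σ n < σ (n+1) := hσ (by omega)
    have ha : (a (n+1) : ℕ) ≤ 1 := by omega
    have hb : (b (n+1) : ℕ) ≤ 1 := by omega
    generalize (a (n+1) : ℕ) = u at *
    generalize (b (n+1) : ℕ) = v at *
    simp only [id, Nat.add_sub_cancel_left, pow_one]
    obtain ⟨m, hm⟩ : ∃ m, σ (n+1) - σ n = m + 1 := ⟨σ (n+1) - σ n - 1, by omega⟩
    rw [hm] at h ⊢
    rw [abs_le] at h ih
    rcases Nat.eq_zero_or_pos m with rfl | hmp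
    · have := ih (by constructor <;> omega)
      simp only [zero_add, pow_one]
      omega
    · obtain ⟨p, rfl⟩ := Nat.exists_eq_add_of_lt hmp
      have hp : (1:ℤ) ≤ 2^p := one_le_pow₀ (by norm_num)
      rw [show 0 + p + 1 + 1 = p + 2 by ring, pow_add] at h ⊢
      have hD : XX σ a n - XX σ b n = 0 := by
        by_contra hne
        rcases lt_or_gt_of_ne hne with h' | h'
        · nlinarith
        · nlinarith
      have := ih (by rw [hD]; norm_num)
      have e1 : XX σ a n = XX σ b n := by omega
      rw [e1]
      omega

lemma FF_trunc {σ : ℕ → ℕ} (hσ : StrictMono σ) (e : ℕ → Fin 2) (n : ℕ) :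
    (XX σ e n : ℝ) * (1/2:ℝ)^(σ n + 1) ≤ FF σ e ∧
    FF σ e ≤ (XX σ e n : ℝ) * (1/2:ℝ)^(σ n + 1) + (1/2:ℝ)^(σ (n+1)) := by
  rw [← XX_cast hσ]; exact FF_tail hσ e (n+1)

lemma FF_trunc' {σ : ℕ → ℕ} (hσ : StrictMono σ) (e : ℕ → Fin 2) (n : ℕ) :
    (XX σ e n : ℝ) * (1/2:ℝ)^(σ n + 1) ≤ FF σ e ∧
    FF σ e ≤ (XX σ e n : ℝ) * (1/2:ℝ)^(σ n + 1) + (1/2:ℝ)^(σ n + 1) := by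
  obtain ⟨h1, h2⟩ := FF_trunc hσ e n
  refine ⟨h1, h2.trans ?_⟩
  have : (1/2:ℝ)^(σ (n+1)) ≤ (1/2:ℝ)^(σ n + 1) :=
    pow_le_pow_of_le_one (by norm_num) (by norm_num) (hσ (Nat.lt_succ_self n))
  linarith

lemma FF_close {σ : ℕ → ℕ} (hσ : StrictMono σ) (a b : ℕ → Fin 2) (n : ℕ)
    (h : |FF σ a - FF σ b| < (1/2:ℝ)^(σ n + 1)) :
    |FF id a - FF id b| ≤ (1/2:ℝ)^n := by
  obtain ⟨a1, a2⟩ := FF_trunc' hσ a n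
  obtain ⟨b1, b2⟩ := FF_trunc' hσ b n
  obtain ⟨a3, a4⟩ := FF_trunc' strictMono_id a n
  obtain ⟨b3, b4⟩ := FF_trunc' strictMono_id b n
  have hX : |XX σ a n - XX σ b n| ≤ 1 := by
    have hp : (0:ℝ) < (1/2:ℝ)^(σ n + 1) := by positivity
    rw [abs_lt] at h
    have u1 : ((XX σ a n - XX σ b n : ℤ) : ℝ) < (2:ℤ) := by
      push_cast
      by_contra! hc
      nlinarith
    have u2 : ((-2:ℤ) : ℝ) < ((XX σ a n - XX σ b n : ℤ) : ℝ) := by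
      push_cast
      by_contra! hc
      nlinarith
    rw [Int.cast_lt] at u1 u2
    rw [abs_le]; omega
  have hk := XX_key hσ a b n hX
  rw [← hk, abs_le] at hX
  have v1 : ((XX id a n : ℤ) : ℝ) - XX id b n ≤ 1 := by exact_mod_cast hX.2
  have v2 : -1 ≤ ((XX id a n : ℤ) : ℝ) - XX id b n := by exact_mod_cast hX.1
  simp only [id] at a3 a4 b3 b4
  have hq : (0:ℝ) < (1/2:ℝ)^n := by positivity
  rw [pow_succ] at a3 a4 b3 b4
  rw [abs_le]
  constructor <;> nlinarith

lemma FFid_mem (e : ℕ → Fin 2) : FF id e ∈ Icc (0:ℝ) 1 := by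
  have := FF_tail strictMono_id e 0
  simpa using this

lemma FFid_surj {y : ℝ} (hy : y ∈ Icc (0:ℝ) 1) : ∃ e, FF id e = y := by
  obtain ⟨e, -, he⟩ := Real.ofDigits_SurjOn (b := 2) (by norm_num) hy
  refine ⟨e, ?_⟩
  rw [← he]
  simp [FF, Real.ofDigits, Real.ofDigitsTerm]

lemma FF_cont {σ : ℕ → ℕ} (hσ : StrictMono σ) : Continuous (FF σ) := by
  unfold FF
  refine continuous_tsum (u := fun j => (1/2:ℝ)^(σ 0) / 2 / 2^j) (fun j => ?_)
    (summable_geometric_two' _) (fun j e => ?_)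
  · refine Continuous.mul ?_ continuous_const
    exact (continuous_of_discreteTopology (f := fun x : Fin 2 => ((x : ℕ) : ℝ))).comp
      (continuous_apply j)
  · rw [Real.norm_of_nonneg (by positivity)]
    simpa using term_le hσ e 0 j

lemma FF_holder {σ : ℕ → ℕ} (hσ : StrictMono σ) {s c : ℝ} (hs : 0 < s)
    (hc : ∀ n, s * ((σ n : ℝ) + 1) ≤ n + c) (a b : ℕ → Fin 2) :
    |FF id a - FF id b| ≤ (2:ℝ)^(c+1) * |FF σ a - FF σ b| ^ s := by
  by_cases h0 : |FF σ a - FF σ b| = 0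
  · have : |FF id a - FF id b| ≤ 0 := by
      refine ge_of_tendsto' (tendsto_pow_atTop_nhds_zero_of_lt_one
        (r := (1/2:ℝ)) (by norm_num) (by norm_num)) (fun n => ?_)
      exact FF_close hσ a b n (by rw [h0]; positivity)
    rw [h0, Real.zero_rpow hs.ne', mul_zero]
    exact this
  · have hpos : 0 < |FF σ a - FF σ b| := lt_of_le_of_ne (abs_nonneg _) (Ne.symm h0)
    have hex : ∃ n, (1/2:ℝ)^(σ n + 1) ≤ |FF σ a - FF σ b| := by
      obtain ⟨n, hn⟩ := exists_pow_lt_of_lt_one hpos (y := (1/2:ℝ)) (by norm_num)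
      refine ⟨n, le_trans ?_ hn.le⟩
      exact pow_le_pow_of_le_one (by norm_num) (by norm_num) (by have := hσ.le_apply (x := n); omega)
    classical
    have hn := Nat.find_spec hex
    have hG : |FF id a - FF id b| ≤ 2 * (1/2:ℝ)^(Nat.find hex) := by
      rcases Nat.eq_zero_or_pos (Nat.find hex) with h | h
      · rw [h]
        have h1 := FFid_mem a
        have h2 := FFid_mem b
        rw [mem_Icc] at h1 h2
        rw [abs_le]; constructor <;> norm_num <;> linarith
      · obtain ⟨m, hm⟩ := Nat.exists_eq_add_of_lt h
        have hlt := Nat.find_min hex (m := m) (by omega)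
        push Not at hlt
        have := FF_close hσ a b m hlt
        rw [hm, zero_add, pow_succ]
        linarith
    generalize Nat.find hex = n at hn hG
    refine hG.trans ?_
    have hδ : ((1/2:ℝ)^(σ n + 1))^s ≤ |FF σ a - FF σ b| ^ s :=
      Real.rpow_le_rpow (by positivity) hn hs.le
    refine le_trans ?_ (mul_le_mul_of_nonneg_left hδ (by positivity))
    have e1 : (1/2:ℝ)^(σ n + 1) = (2:ℝ)^(-((σ n : ℝ) + 1)) := by
      rw [Real.rpow_neg (by norm_num), ← Nat.cast_add_one, Real.rpow_natCast]; simp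
    have e2 : (1/2:ℝ)^n = (2:ℝ)^(-(n : ℝ)) := by
      rw [Real.rpow_neg (by norm_num), Real.rpow_natCast]; simp
    rw [e1, e2, ← Real.rpow_mul (by norm_num), ← Real.rpow_add (by norm_num)]
    calc 2 * (2:ℝ)^(-(n:ℝ)) = (2:ℝ)^((1:ℝ) + -(n:ℝ)) := by
          rw [Real.rpow_add (by norm_num), Real.rpow_one]
      _ ≤ _ := by
          apply Real.rpow_le_rpow_of_exponent_le (by norm_num)
          have := hc n
          nlinarith

lemma exists_sigma {s : ℝ} (hs0 : 0 < s) (hs : s < 1/2) :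
    ∃ σ : ℕ → ℕ, StrictMono σ ∧ (∀ n, s * ((σ n : ℝ) + 1) ≤ n + 1) ∧
      ∀ N : ℕ, ∃ j, 2 * (σ j + 1) + N ≤ σ (j+1) := by
  obtain ⟨M, hM⟩ := exists_nat_gt (s / (1 - 2*s))
  have hM0 : 0 < (M:ℝ) := lt_trans (div_pos hs0 (by linarith)) hM
  have hMn : 0 < M := by exact_mod_cast hM0
  rw [div_lt_iff₀ (by linarith)] at hM
  have hsM : s * (2 + 1/(M:ℝ)) ≤ 1 := by
    have : s / M ≤ 1 - 2*s := by
      rw [div_le_iff₀ hM0]; linarith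
    calc s * (2 + 1/(M:ℝ)) = 2 * s + s / M := by ring
      _ ≤ 1 := by linarith
  set K := 8 * M with hK
  have hK1 : 1 < K := by omega
  refine ⟨fun j => j + K ^ (Nat.log K j) + K ^ (Nat.log K j) / M, ?_, ?_, ?_⟩
  · intro i j hij
    have h1 : K ^ (Nat.log K i) ≤ K ^ (Nat.log K j) :=
      Nat.pow_le_pow_right (by omega) (Nat.log_mono_right hij.le)
    have h2 := Nat.div_le_div_right (c := M) h1
    dsimp only
    omega
  · intro n
    have hP : K ^ (Nat.log K n) ≤ n + 1 := by
      rcases Nat.eq_zero_or_pos n with rfl | h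
      · simp
      · exact (Nat.pow_log_le_self K (by omega)).trans (by omega)
    dsimp only
    generalize K ^ (Nat.log K n) = P at hP ⊢
    have hP' : (P:ℝ) ≤ n + 1 := by exact_mod_cast hP
    have hd : ((P / M : ℕ) : ℝ) ≤ (n+1) / M := Nat.cast_div_le.trans (by gcongr)
    push_cast
    calc s * ((n:ℝ) + P + ((P / M : ℕ) : ℝ) + 1) ≤ s * ((2 + 1/(M:ℝ)) * (n+1)) := by
          apply mul_le_mul_of_nonneg_left _ hs0.le
          have : (2 + 1/(M:ℝ)) * (n+1) = 2*(n+1) + (n+1)/M := by ring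
          linarith
      _ = (s * (2 + 1/(M:ℝ))) * (n+1) := by ring
      _ ≤ 1 * (n+1) := by gcongr
      _ = _ := one_mul _
  · intro N
    have hpos : 0 < K ^ N := by positivity
    have hpos1 : 0 < K ^ (N+1) := by positivity
    have hlt : K ^ N < K ^ (N+1) := Nat.pow_lt_pow_right hK1 (by omega)
    refine ⟨K^(N+1) - 1, ?_⟩
    have e1 : K^(N+1) - 1 + 1 = K^(N+1) := by omega
    have l1 : Nat.log K (K^(N+1)) = N+1 := Nat.log_pow hK1 _
    have l2 : Nat.log K (K^(N+1) - 1) = N := by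
      rw [Nat.log_eq_iff (Or.inr ⟨hK1, by omega⟩)]
      omega
    dsimp only
    rw [e1, l1, l2]
    have h3 : K^(N+1) / M = 8 * K^N := by
      rw [pow_succ, hK, show (8*M)^N * (8*M) = (8 * (8*M)^N) * M by ring, Nat.mul_div_cancel _ hMn]
    have h4 : K^N / M ≤ K^N := Nat.div_le_self _ _
    have h5 : N < K^N := Nat.lt_pow_self hK1
    rw [h3]
    omega

open scoped NNReal in
lemma dim_low (n d : ℕ) (ι : Fin n → Fin d) (E : Set (Pt d)) (f : ℝ → ℝ) (C s : ℝ≥0) (hs : 0 < s)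
    (hf : ∀ x ∈ E, ∀ y ∈ E, ∀ i, |f (x (ι i)) - f (y (ι i))| ≤ C * |x (ι i) - y (ι i)|^(s:ℝ))
    (hsurj : ∀ z : Fin n → ℝ, (∀ i, z i ∈ Icc (0:ℝ) 1) → ∃ x ∈ E, ∀ i, f (x (ι i)) = z i) :
    (n : ℝ≥0∞) * s ≤ dimH E := by
  have hH : HolderOnWith C s (fun (x : Pt d) (i : Fin n) => f (x (ι i))) E := by
    intro x hx y hy
    rw [edist_dist, edist_dist, ENNReal.ofReal_rpow_of_nonneg dist_nonneg s.coe_nonneg,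
      ← ENNReal.ofReal_coe_nnreal, ← ENNReal.ofReal_mul C.coe_nonneg]
    apply ENNReal.ofReal_le_ofReal
    rw [dist_pi_le_iff (by positivity)]
    intro i
    rw [Real.dist_eq]
    refine (hf x hx y hy i).trans ?_
    have : |x (ι i) - y (ι i)| ≤ dist x y := by
      have := PiLp.norm_apply_le (x - y) (ι i)
      rw [dist_eq_norm]
      simpa using this
    gcongr
  have h1 := hH.dimH_image_le hs
  have h2 : (n : ℝ≥0∞) ≤ dimH ((fun (x : Pt d) (i : Fin n) => f (x (ι i))) '' E) := by
    have h3 : dimH (ball (fun _ => 1/2 : Fin n → ℝ) (1/2)) = n :=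
      Real.dimH_ball_pi_fin _ (by norm_num)
    rw [← h3]
    apply dimH_mono
    intro z hz
    obtain ⟨x, hx, hxz⟩ := hsurj z (fun i => by
      rw [mem_ball, dist_pi_lt_iff (by norm_num)] at hz
      have := hz i
      rw [Real.dist_eq, abs_lt] at this
      constructor <;> linarith)
    exact ⟨x, hx, funext hxz⟩
  have h4 := h2.trans h1
  rwa [ENNReal.le_div_iff_mul_le (Or.inl (by simpa using hs.ne')) (Or.inl (by simp))] at h4

lemma box_compact (d : ℕ) (A : Fin d → Set ℝ) (hA : ∀ i, IsCompact (A i)) :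
    IsCompact {x : Pt d | ∀ i, x i ∈ A i} := by
  have h := isCompact_univ_pi hA
  have h2 := h.image (PiLp.continuous_toLp 2 (fun _ : Fin d => ℝ))
  convert h2 using 1
  ext x
  constructor
  · intro hx
    exact ⟨fun i => x i, fun i _ => hx i, rfl⟩
  · rintro ⟨y, hy, rfl⟩ i
    exact hy i (mem_univ _)

lemma dist_trunc (d : ℕ) (x x' : Pt d) (η : ℝ) (hη : 0 ≤ η) (h : ∀ i, |x i - x' i| ≤ η) :
    dist x x' ≤ d * η := by
  rw [EuclideanSpace.dist_eq]
  apply Real.sqrt_le_iff.2 ⟨by positivity, ?_⟩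
  calc ∑ i, dist (x i) (x' i) ^ 2 ≤ ∑ _i : Fin d, η^2 := by
        apply Finset.sum_le_sum
        intro i _
        rw [Real.dist_eq]
        exact pow_le_pow_left₀ (abs_nonneg _) (h i) 2
    _ = d * η^2 := by simp
    _ ≤ (d * η)^2 := by
        rw [mul_pow]
        have : (d:ℝ) ≤ (d:ℝ)^2 := by exact_mod_cast Nat.le_self_pow (by norm_num) d
        gcongr

lemma XX_bds {σ : ℕ → ℕ} (hσ : StrictMono σ) (e : ℕ → Fin 2) (n : ℕ) :
    0 ≤ XX σ e n ∧ XX σ e n ≤ 2^(σ n + 1) := by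
  constructor
  · unfold XX; positivity
  · have h1 := (FF_trunc hσ e n).1
    have h2 := (FF_tail hσ e 0).2
    simp only [Finset.range_zero, Finset.sum_empty, zero_add] at h2
    have h3 : (1/2:ℝ)^(σ 0) ≤ 1 := pow_le_one₀ (by norm_num) (by norm_num)
    have h4 := h1.trans (h2.trans h3)
    rw [one_div_pow, mul_one_div, div_le_one (by positivity)] at h4
    exact_mod_cast h4

lemma dist_cover (d : ℕ) {σ : ℕ → ℕ} (hσ : StrictMono σ) (j : ℕ) (x y : Pt d)
    (hx : ∀ i, x i ∈ range (FF σ)) (hy : ∀ i, y i ∈ range (FF σ)) :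
    ∃ m ∈ Finset.range (d * (2^(σ j + 1))^2 + 1),
      |dist x y - √(m:ℝ) * (1/2)^(σ j + 1)| ≤ 2 * d * (1/2:ℝ)^(σ (j+1)) := by
  choose a ha using hx
  choose b hb using hy
  set x' : Pt d := WithLp.toLp 2 (fun i => (XX σ (a i) j : ℝ) * (1/2)^(σ j + 1)) with hx'
  set y' : Pt d := WithLp.toLp 2 (fun i => (XX σ (b i) j : ℝ) * (1/2)^(σ j + 1)) with hy'
  have h1 : dist x x' ≤ d * (1/2:ℝ)^(σ (j+1)) := by
    refine dist_trunc d x x' _ (by positivity) (fun i => ?_)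
    have := FF_trunc hσ (a i) j
    rw [← ha i, hx', abs_le]
    dsimp only
    have h0 : (0:ℝ) < (1/2)^(σ (j+1)) := by positivity
    constructor <;> linarith
  have h2 : dist y y' ≤ d * (1/2:ℝ)^(σ (j+1)) := by
    refine dist_trunc d y y' _ (by positivity) (fun i => ?_)
    have := FF_trunc hσ (b i) j
    rw [← hb i, hy', abs_le]
    dsimp only
    have h0 : (0:ℝ) < (1/2)^(σ (j+1)) := by positivity
    constructor <;> linarith
  set m : ℕ := ∑ i, ((XX σ (a i) j - XX σ (b i) j).natAbs)^2 with hm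
  have hmc : (m:ℝ) = ∑ i, ((XX σ (a i) j : ℝ) - XX σ (b i) j)^2 := by
    have : (m:ℤ) = ∑ i, (XX σ (a i) j - XX σ (b i) j)^2 := by
      rw [hm]; push_cast
      simp
    have h := congrArg (fun z : ℤ => (z:ℝ)) this
    push_cast at h
    exact h
  refine ⟨m, ?_, ?_⟩
  · rw [Finset.mem_range, Nat.lt_succ_iff]
    calc m ≤ ∑ _i : Fin d, (2^(σ j + 1))^2 := by
          apply Finset.sum_le_sum
          intro i _
          apply Nat.pow_le_pow_left
          have u := XX_bds hσ (a i) j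
          have v := XX_bds hσ (b i) j
          zify
          rw [abs_le]
          constructor <;> linarith
      _ = _ := by simp
  · have h3 : dist x' y' = √(m:ℝ) * (1/2)^(σ j + 1) := by
      rw [EuclideanSpace.dist_eq, hmc, ← Real.sqrt_sq (show (0:ℝ) ≤ (1/2)^(σ j + 1) by positivity),
        ← Real.sqrt_mul' _ (by positivity), Finset.sum_mul]
      congr 1
      refine Finset.sum_congr rfl (fun i _ => ?_)
      rw [Real.dist_eq, sq_abs, hx', hy']
      dsimp only
      ring
    rw [← h3]
    have t1 := dist_triangle4 x x' y' y
    have t2 := dist_triangle4 x' x y y'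
    rw [dist_comm y' y] at t1
    rw [dist_comm x' x] at t2
    rw [abs_le]
    constructor <;> linarith

lemma dist_null (d : ℕ) {σ : ℕ → ℕ} (hσ : StrictMono σ)
    (hN : ∀ N : ℕ, ∃ j, 2 * (σ j + 1) + N ≤ σ (j+1)) :
    volume {r : ℝ | ∃ x y : Pt d, (∀ i, x i ∈ range (FF σ)) ∧ (∀ i, y i ∈ range (FF σ)) ∧
      dist x y = r} = 0 := by
  have key : ∀ N : ℕ, volume {r : ℝ | ∃ x y : Pt d, (∀ i, x i ∈ range (FF σ)) ∧
      (∀ i, y i ∈ range (FF σ)) ∧ dist x y = r} ≤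
        ENNReal.ofReal (4 * d * (d+1) * (1/2:ℝ)^N) := by
    intro N
    obtain ⟨j, hj⟩ := hN N
    set η : ℝ := (1/2:ℝ)^(σ (j+1)) with hη
    set q : ℕ := 2^(σ j + 1) with hq
    have hsub : {r : ℝ | ∃ x y : Pt d, (∀ i, x i ∈ range (FF σ)) ∧
      (∀ i, y i ∈ range (FF σ)) ∧ dist x y = r} ⊆
        ⋃ m ∈ Finset.range (d * q^2 + 1),
          Icc (√(m:ℝ) * (1/2)^(σ j + 1) - 2 * d * η) (√(m:ℝ) * (1/2)^(σ j + 1) + 2 * d * η) := by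
      rintro r ⟨x, y, hx, hy, rfl⟩
      obtain ⟨m, hm, hmr⟩ := dist_cover d hσ j x y hx hy
      simp only [mem_iUnion]
      refine ⟨m, hm, ?_⟩
      rw [abs_le] at hmr
      constructor <;> linarith
    refine (measure_mono hsub).trans ((measure_biUnion_finset_le _ _).trans ?_)
    simp only [Real.volume_Icc]
    have e : ∀ m : ℕ, √(m:ℝ) * (1/2)^(σ j + 1) + 2 * d * η - (√(m:ℝ) * (1/2)^(σ j + 1) - 2 * d * η)
        = 4 * d * η := fun m => by ring
    simp only [e, Finset.sum_const, Finset.card_range, nsmul_eq_mul]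
    rw [← ENNReal.ofReal_natCast, ← ENNReal.ofReal_mul (by positivity)]
    apply ENNReal.ofReal_le_ofReal
    have hqη : (q:ℝ)^2 * η ≤ (1/2:ℝ)^N := by
      have h1 : η ≤ (1/2:ℝ)^(2 * (σ j + 1) + N) :=
        pow_le_pow_of_le_one (by norm_num) (by norm_num) hj
      calc (q:ℝ)^2 * η ≤ (q:ℝ)^2 * (1/2:ℝ)^(2 * (σ j + 1) + N) := by gcongr
        _ = (1/2:ℝ)^N := by
          rw [hq, pow_add (1/2:ℝ), pow_mul', ← mul_assoc, ← mul_pow]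
          push_cast
          rw [← mul_pow]
          norm_num
    have hq1 : (1:ℝ) ≤ (q:ℝ)^2 := by
      apply one_le_pow₀
      rw [hq]; push_cast; exact one_le_pow₀ (by norm_num)
    have hη0 : 0 ≤ η := by positivity
    push_cast
    calc ((d:ℝ) * q^2 + 1) * (4 * d * η) ≤ ((d:ℝ) * q^2 + q^2) * (4 * d * η) := by gcongr
      _ = 4 * d * (d+1) * (q^2 * η) := by ring
      _ ≤ _ := by gcongr
  apply le_antisymm _ zero_le
  have ht : Filter.Tendsto (fun N : ℕ => ENNReal.ofReal (4 * d * (d+1) * (1/2:ℝ)^N)) Filter.atTop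
      (𝓝 (ENNReal.ofReal (4 * d * (d+1) * 0))) := by
    apply ENNReal.tendsto_ofReal
    exact (tendsto_pow_atTop_nhds_zero_of_lt_one (by norm_num) (by norm_num)).const_mul _
  simp only [mul_zero, ENNReal.ofReal_zero] at ht
  exact ge_of_tendsto' ht key

lemma caseA (d k : ℕ) (hk : 2 ≤ k) (hkd : k ≤ d) (t : ℝ) (ht : t < (k:ℝ) - 1) :
    ∃ E : Set (Pt d), IsCompact E ∧ ENNReal.ofReal t < dimH E ∧ volume (Tconf d k E) = 0 := by
  obtain ⟨n, rfl⟩ : ∃ n, k = n + 1 := ⟨k - 1, by omega⟩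
  have hnd : n ≤ d := by omega
  let A : Fin d → Set ℝ := fun i => if (i:ℕ) < n then Icc 0 1 else {0}
  refine ⟨{x | ∀ i, x i ∈ A i}, box_compact d A (fun i => ?_), ?_, ?_⟩
  · by_cases h : (i:ℕ) < n
    · simp only [A, h, if_true]; exact isCompact_Icc
    · simp only [A, h, if_false]; exact isCompact_singleton
  · have h := dim_low n d (Fin.castLE hnd) {x | ∀ i, x i ∈ A i} id 1 1 one_pos
      (fun x _ y _ i => by simp) (fun z hz => by
        refine ⟨WithLp.toLp 2 (fun i => if h : (i:ℕ) < n then z ⟨i, h⟩ else 0), ?_, ?_⟩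
        · intro i
          by_cases h : (i:ℕ) < n
          · simp only [A, h, if_true, dite_true]; exact hz _
          · simp [A, h]
        · intro i
          simp)
    refine lt_of_lt_of_le ?_ h
    simp only [ENNReal.coe_one, mul_one]
    rw [← ENNReal.ofReal_natCast, ENNReal.ofReal_lt_ofReal_iff (by exact_mod_cast (by omega : 0 < n))]
    push_cast at ht
    linarith
  · have : Tconf d (n+1) {x | ∀ i, x i ∈ A i} = ∅ := by
      rw [Tconf, image_eq_empty, eq_empty_iff_forall_notMem]
      rintro x ⟨hx, hnd'⟩
      unfold Nondeg at hnd'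
      let π : Pt d →ₗ[ℝ] (Fin n → ℝ) :=
        { toFun := fun v i => v (Fin.castLE hnd i)
          map_add' := fun _ _ => rfl
          map_smul' := fun _ _ => rfl }
      let W : Submodule ℝ (Pt d) :=
        { carrier := {v | ∀ i : Fin d, n ≤ (i:ℕ) → v i = 0}
          add_mem' := fun {a b} ha hb i hi => by simp [ha i hi, hb i hi]
          zero_mem' := fun i _ => rfl
          smul_mem' := fun c a ha i hi => by simp [ha i hi] }
      have hW : Submodule.span ℝ (range fun i : Fin (n+1) => x i.succ - x 0) ≤ W := by
        rw [Submodule.span_le]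
        rintro _ ⟨i, rfl⟩ l hl
        have h1 := hx i.succ l
        have h2 := hx 0 l
        simp only [A, not_lt.2 hl, if_false, mem_singleton_iff] at h1 h2
        simp [h1, h2]
      have hdis : Disjoint W (LinearMap.ker π) := by
        rw [Submodule.disjoint_def]
        intro v hv hker
        ext i
        by_cases h : (i:ℕ) < n
        · have := congrFun (LinearMap.mem_ker.1 hker) ⟨i, h⟩
          exact this
        · exact hv i (not_lt.1 h)
      have := (hnd'.map (hdis.mono_left hW)).fintype_card_le_finrank
      simp at this
    rw [this, measure_empty]

lemma caseB (d k : ℕ) (hd : 2 ≤ d) (hk : 2 ≤ k) (t : ℝ) (ht : t < (d:ℝ)/2) :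
    ∃ E : Set (Pt d), IsCompact E ∧ ENNReal.ofReal t < dimH E ∧ volume (Tconf d k E) = 0 := by
  have hd0 : (0:ℝ) < d := by exact_mod_cast (by omega : 0 < d)
  obtain ⟨s, hs1, hs2⟩ : ∃ s : ℝ, max 0 (t/d) < s ∧ s < 1/2 := by
    apply exists_between
    rw [max_lt_iff, div_lt_iff₀ hd0]
    constructor <;> linarith
  rw [max_lt_iff, div_lt_iff₀ hd0] at hs1
  obtain ⟨hs0, hst⟩ := hs1
  obtain ⟨σ, hσ, hσc, hσN⟩ := exists_sigma hs0 hs2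
  refine ⟨{x | ∀ i, x i ∈ range (FF σ)}, box_compact d _ (fun _ => isCompact_range (FF_cont hσ)),
    ?_, ?_⟩
  · have hH := FF_holder hσ hs0 hσc
    let f : ℝ → ℝ := fun u => FF id (Function.invFun (FF σ) u)
    have hf : ∀ e, f (FF σ e) = FF id e := by
      intro e
      have h1 : FF σ (Function.invFun (FF σ) (FF σ e)) = FF σ e :=
        Function.invFun_eq ⟨e, rfl⟩
      have h2 := hH (Function.invFun (FF σ) (FF σ e)) e
      rw [h1, sub_self, abs_zero, Real.zero_rpow hs0.ne', mul_zero] at h2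
      exact sub_eq_zero.1 (abs_nonpos_iff.1 h2)
    obtain ⟨C, hC⟩ : ∃ C : NNReal, (C:ℝ) = (2:ℝ)^((1:ℝ)+1) := ⟨⟨_, by positivity⟩, rfl⟩
    lift s to NNReal using hs0.le
    have h := dim_low d d id {x | ∀ i, x i ∈ range (FF σ)} f C
      s (by exact_mod_cast hs0) (fun x hx y hy i => by
        obtain ⟨a, ha⟩ := hx i
        obtain ⟨b, hb⟩ := hy i
        simp only [id]
        rw [← ha, ← hb, hf, hf, hC]
        exact hH a b) (fun z hz => by
        choose e he using fun i => FFid_surj (hz i)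
        refine ⟨WithLp.toLp 2 (fun i => FF σ (e i)), fun i => ⟨e i, rfl⟩, fun i => ?_⟩
        simp only [id]
        rw [hf, he])
    refine lt_of_lt_of_le ?_ h
    rw [← ENNReal.ofReal_natCast, ← ENNReal.ofReal_coe_nnreal,
      ← ENNReal.ofReal_mul (by positivity)]
    rw [ENNReal.ofReal_lt_ofReal_iff (by positivity)]
    linarith
  · have h01 : (0 : Fin (k+1)) < Fin.last k := by
      rw [Fin.lt_def]; simp; omega
    let p : PairIdx k := ⟨(0, Fin.last k), h01⟩
    refine measure_mono_null ?_ (Measure.pi_eval_preimage_null (fun _ : PairIdx k => volume) (i := p)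
      (dist_null d hσ hσN))
    rintro _ ⟨x, ⟨hx, -⟩, rfl⟩
    exact ⟨x 0, x (Fin.last k), hx _, hx _, rfl⟩

theorem stmt5 (d k : ℕ) (hd : 2 ≤ d) (hk : 2 ≤ k) (hkd : k ≤ d) :
    (∀ t : ℝ, t < max ((k : ℝ) - 1) ((d : ℝ) / 2) →
      ∃ E : Set (Pt d), IsCompact E ∧ ENNReal.ofReal t < dimH E ∧
        volume (Tconf d k E) = 0) ∧
    max ((k : ℝ) - 1) ((d : ℝ) / 2) ≤
      sInf {α : ℝ | ∀ E : Set (Pt d), IsCompact E → ENNReal.ofReal α < dimH E →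
        0 < volume (Tconf d k E)} := by
  have main : ∀ t : ℝ, t < max ((k : ℝ) - 1) ((d : ℝ) / 2) →
      ∃ E : Set (Pt d), IsCompact E ∧ ENNReal.ofReal t < dimH E ∧
        volume (Tconf d k E) = 0 := by
    intro t ht
    rcases lt_max_iff.1 ht with h | h
    · exact caseA d k hk hkd t h
    · exact caseB d k hd hk t h
  refine ⟨main, le_csInf ⟨(d:ℝ), ?_⟩ ?_⟩
  · intro E _ hE
    exfalso
    have h1 : dimH E ≤ dimH (univ : Set (Pt d)) := dimH_mono (subset_univ _)
    rw [Real.dimH_univ_eq_finrank, finrank_euclideanSpace_fin] at h1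
    rw [ENNReal.ofReal_natCast] at hE
    exact absurd hE (not_lt.2 h1)
  · intro α hα
    by_contra! hlt
    obtain ⟨E, hE, hdim, hvol⟩ := main α hlt
    have := hα E hE hdim
    rw [hvol] at this
    exact lt_irrefl _ this
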